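/- For every integer n ≥ 2, the number of ordered pairs (f, f′), where f: 𝒞 → ℕ and f′: ℕ × 𝒞 → ℕ are finitely supported functions all of whose values are triangular numbers and which satisfy Σ_{𝔠} 2^{|𝔠|} · f(𝔠) + Σ_{(a,𝔠)} 2^{a+|𝔠|} · f′(a,𝔠) = n, is strictly smaller than the number of bipartitions of n. (This is the combinatorial content of the result that for the compact Lie group Sp(n) at the bad prime ℓ = 2, the number of weights of its 2-fusion system is strictly less than |Irr(W(C_n))|.) -/

import Mathlib

/-- A natural number is triangular if it is of the form `k * (k + 1) / 2`. -/
def IsTriangular (m : ℕ) : Prop := ∃ k : ℕ, m = k * (k + 1) / 2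

/-- The sum `|𝔠| = c₁ + ⋯ + c_t` of a finite sequence `𝔠` of strictly positive integers. -/
def csum (c : List ℕ+) : ℕ := (c.map fun x => (x : ℕ)).sum

/-!
A partition is determined by its 2-core and its 2-quotient `(l, m)`. The cores have triangular
size, one for each triangular number, and the partition has size `(size of the core) + 2|l| + 2|m|`.
Replacing `l` and `m` by their own cores and quotients, and so on, turns a partition into its 2-core
tower: a finitely supported labelling of the infinite binary tree by triangular numbers, in which a
node of depth `d` has weight `2 ^ d`. The index set `ℕ × 𝒞` is this tree and `(a, 𝔠)` has depth
`a + |𝔠|`, so `f′` is an arbitrary tower while `f` is a tower supported on the nodes `(0, 𝔠)`.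
Hence the pairs `(f, f′)` inject into the bipartitions of `n`, and the tower with a single core of
size `1` at `(1, [])`, of total weight `2 ≤ n`, does not come from any `f`.
-/

section Partitions

/-- The size of the partition in which the part `i + 1` has multiplicity `m i`. Throughout,
partitions are encoded by such multiplicity functions. -/
noncomputable def partitionSize (m : ℕ →₀ ℕ) : ℕ :=
  Finsupp.weight (· + 1) m

lemma partitionSize_eq_sum_range {m : ℕ →₀ ℕ} {N : ℕ} (hm : m.support ⊆ Finset.range N) :
    partitionSize m = ∑ i ∈ Finset.range N, (i + 1) * m i := by
  rw [partitionSize, Finsupp.weight_apply, Finsupp.sum_of_support_subset _ hm _ (by simp)]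
  exact Finset.sum_congr rfl fun i _ => mul_comm _ _

lemma support_subset_range_of_partitionSize_le {m : ℕ →₀ ℕ} {N : ℕ} (h : partitionSize m ≤ N) :
    m.support ⊆ Finset.range N := fun _ hi =>
  Finset.mem_range.2 <|
    (Finsupp.le_weight_of_ne_zero' (· + 1) (Finsupp.mem_support_iff.1 hi)).trans h

/-- The partition with multiplicities `m`, as a term of Mathlib's type of partitions. -/
noncomputable def toPartition (m : ℕ →₀ ℕ) : Σ k : ℕ, Nat.Partition k :=
  ⟨((Finsupp.toMultiset m).map (· + 1)).sum,
    { parts := (Finsupp.toMultiset m).map (· + 1)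
      parts_pos := fun hi => by
        obtain ⟨j, -, rfl⟩ := Multiset.mem_map.1 hi
        exact j.succ_pos
      parts_sum := rfl }⟩

lemma toPartition_fst (m : ℕ →₀ ℕ) : (toPartition m).1 = partitionSize m := by
  change ((Finsupp.toMultiset m).map (· + 1)).sum = partitionSize m
  induction m using Finsupp.induction_linear with
  | zero => simp [partitionSize]
  | add l m hl hm => rw [map_add, Multiset.map_add, Multiset.sum_add, hl, hm, partitionSize,
      partitionSize, partitionSize, map_add]
  | single i c => simp [partitionSize, Finsupp.weight_single, Multiset.map_nsmul,
      Multiset.sum_nsmul]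

lemma toPartition_injective : Function.Injective toPartition := fun _ _ h =>
  Finsupp.orderIsoMultiset.injective <| Multiset.map_injective (add_left_injective 1) <|
    congrArg (fun p : Σ k : ℕ, Nat.Partition k => p.2.parts) h

end Partitions

section BetaSets

open Denumerable

/-- The beta-set with `N` beads of the partition with multiplicities `m`: the set of the numbers
`λ'_j + (N - 1 - j)` for `j < N`, where `λ'` is the conjugate partition. Its successive gaps are
`m (N - 1), …, m 0`. Multiplicities of parts larger than `N` are ignored. -/
def betaSet (N : ℕ) (m : ℕ →₀ ℕ) : Finset ℕ :=
  raise'Finset ((List.range N).reverse.map m) 0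

lemma length_raise' (l : List ℕ) (k : ℕ) : (raise' l k).length = l.length := by
  induction l generalizing k with
  | nil => rfl
  | cons a l ih => simp [raise', ih]

lemma card_betaSet (N : ℕ) (m : ℕ →₀ ℕ) : (betaSet N m).card = N := by
  simp [betaSet, raise'Finset, length_raise']

lemma sum_raise'_map_reverse_range (m : ℕ → ℕ) (N k : ℕ) :
    (raise' ((List.range N).reverse.map m) k).sum =
      ∑ i ∈ Finset.range N, (i + 1) * m i + N * k + ∑ i ∈ Finset.range N, i := by
  induction N generalizing k with
  | zero => simp [raise']
  | succ N ih =>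
    simp only [List.range_succ, List.reverse_append, List.reverse_singleton, List.singleton_append,
      List.map_cons, raise', List.sum_cons, ih, Finset.sum_range_succ]
    ring

lemma sum_betaSet {N : ℕ} {m : ℕ →₀ ℕ} (hm : m.support ⊆ Finset.range N) :
    ∑ x ∈ betaSet N m, x = partitionSize m + ∑ i ∈ Finset.range N, i := by
  rw [partitionSize_eq_sum_range hm]
  simpa [betaSet, raise'Finset, Finset.sum] using sum_raise'_map_reverse_range m N 0

lemma raise'Finset_injective (k : ℕ) : Function.Injective (raise'Finset · k) := fun l l' h => by
  have hperm : (raise' l k).Perm (raise' l' k) := Multiset.coe_eq_coe.1 (congrArg Finset.val h)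
  rw [← lower_raise' l k, ← lower_raise' l' k,
    hperm.eq_of_pairwise' (raise'_sorted l k).pairwise (raise'_sorted l' k).pairwise]

lemma betaSet_injOn (N : ℕ) :
    Set.InjOn (betaSet N) {m | m.support ⊆ Finset.range N} := fun m hm m' hm' h => by
  have hmap : ∀ i < N, m i = m' i := by
    simpa using raise'Finset_injective 0 h
  ext i
  rcases lt_or_ge i N with hi | hi
  · exact hmap i hi
  · rw [Finsupp.notMem_support_iff.1 fun h => hi.not_gt (Finset.mem_range.1 (hm h)),
      Finsupp.notMem_support_iff.1 fun h => hi.not_gt (Finset.mem_range.1 (hm' h))]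

/-- The partition whose beta-set with `X.card` beads is `X`. -/
def ofBetaSet (X : Finset ℕ) : ℕ →₀ ℕ :=
  (lower' X.sort 0).reverse.toFinsupp

lemma length_lower' (l : List ℕ) (k : ℕ) : (lower' l k).length = l.length := by
  induction l generalizing k with
  | nil => rfl
  | cons a l ih => simp [lower', ih]

lemma support_ofBetaSet_subset (X : Finset ℕ) :
    (ofBetaSet X).support ⊆ Finset.range X.card := by
  have h := (lower' X.sort 0).reverse.toFinsupp_support_subset
  rwa [List.length_reverse, length_lower', Finset.length_sort] at h

lemma betaSet_ofBetaSet (X : Finset ℕ) : betaSet X.card (ofBetaSet X) = X := by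
  have hgaps : (List.range X.card).reverse.map (ofBetaSet X) = lower' X.sort 0 := by
    rw [List.map_reverse, List.reverse_eq_iff]
    refine List.ext_getElem (by simp [length_lower']) fun i hi hi' => ?_
    simp [ofBetaSet, List.getElem?_eq_getElem hi']
  have hraise : raise' (lower' X.sort 0) 0 = X.sort :=
    raise_lower' (fun _ _ => Nat.zero_le _) (Finset.sortedLT_sort X)
  rw [betaSet, hgaps]
  exact Finset.val_injective <| (congrArg ((↑) : List ℕ → Multiset ℕ) hraise).trans (X.sort_eq _)

lemma sum_eq_partitionSize_ofBetaSet (X : Finset ℕ) :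
    ∑ x ∈ X, x = partitionSize (ofBetaSet X) + ∑ i ∈ Finset.range X.card, i := by
  conv_lhs => rw [← betaSet_ofBetaSet X]
  exact sum_betaSet (support_ofBetaSet_subset X)

lemma ofBetaSet_injOn (N : ℕ) : Set.InjOn ofBetaSet {X | X.card = N} := fun X hX Y hY h => by
  rw [← betaSet_ofBetaSet X, ← betaSet_ofBetaSet Y, h, hX, hY]

end BetaSets

section CoreQuotient

/-- The set of the numbers `2 * y` with `y ∈ Y` and `2 * z + 1` with `z ∈ Z`: the two-runner abacus
with runners `Y` and `Z`. -/
def weave (Y Z : Finset ℕ) : Finset ℕ :=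
  (Y.disjSum Z).map Equiv.natSumNatEquivNat.toEmbedding

lemma card_weave (Y Z : Finset ℕ) : (weave Y Z).card = Y.card + Z.card := by
  rw [weave, Finset.card_map, Finset.card_disjSum]

lemma sum_weave (Y Z : Finset ℕ) :
    ∑ x ∈ weave Y Z, x = 2 * ∑ y ∈ Y, y + 2 * ∑ z ∈ Z, z + Z.card := by
  simp [weave, Finset.sum_disjSum, Finset.sum_add_distrib, Finset.mul_sum, add_assoc]

lemma weave_inj {Y Z Y' Z' : Finset ℕ} : weave Y Z = weave Y' Z' ↔ Y = Y' ∧ Z = Z' := by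
  rw [weave, weave, Finset.map_inj, Finset.disjSum_inj]

/-- The size of the 2-core whose two runners carry `M + d` and `M - d` beads. -/
def coreSize (d : ℤ) : ℕ :=
  (d * (2 * d - 1)).toNat

lemma coe_coreSize (d : ℤ) : (coreSize d : ℤ) = d * (2 * d - 1) :=
  Int.toNat_of_nonneg <| by
    rcases le_or_gt d 0 with hd | hd <;> nlinarith

lemma abs_le_coreSize (d : ℤ) : |d| ≤ coreSize d := by
  rw [coe_coreSize, abs_le]
  constructor <;> rcases le_or_gt d 0 with hd | hd <;> nlinarith

lemma IsTriangular.exists_coreSize_eq {t : ℕ} (ht : IsTriangular t) : ∃ d, coreSize d = t := by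
  obtain ⟨k, rfl⟩ := ht
  rcases Nat.even_or_odd' k with ⟨j, rfl | rfl⟩
  · refine ⟨-j, ?_⟩
    have h : 2 * j * (2 * j + 1) / 2 = j * (2 * j + 1) := by
      rw [mul_assoc, Nat.mul_div_cancel_left _ two_pos]
    zify [h, coe_coreSize]
    ring
  · refine ⟨j + 1, ?_⟩
    have h : (2 * j + 1) * (2 * j + 1 + 1) / 2 = (2 * j + 1) * (j + 1) := by
      rw [show (2 * j + 1) * (2 * j + 1 + 1) = 2 * ((2 * j + 1) * (j + 1)) by ring,
        Nat.mul_div_cancel_left _ two_pos]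
    zify [h, coe_coreSize]
    ring

/-- The size of a partition with 2-core of charge `d` and 2-quotient `(l, m)`. -/
noncomputable def coreQuotientSize (d : ℤ) (l m : ℕ →₀ ℕ) : ℕ :=
  coreSize d + 2 * partitionSize l + 2 * partitionSize m

/-- The partition with 2-core of charge `d` and 2-quotient `(l, m)`. It is read off an abacus whose
number of beads is twice its size: this is enough for `l` and `m` to fit on their runners. -/
noncomputable def ofCoreQuotient (d : ℤ) (l m : ℕ →₀ ℕ) : ℕ →₀ ℕ :=
  let n : ℤ := coreQuotientSize d l m
  ofBetaSet (weave (betaSet (n + d).toNat l) (betaSet (n - d).toNat m))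

lemma abs_le_coreQuotientSize (d : ℤ) (l m : ℕ →₀ ℕ) : |d| ≤ coreQuotientSize d l m :=
  (abs_le_coreSize d).trans <| by unfold coreQuotientSize; omega

lemma support_subset_range_runners (d : ℤ) (l m : ℕ →₀ ℕ) :
    l.support ⊆ Finset.range (coreQuotientSize d l m + d).toNat ∧
      m.support ⊆ Finset.range (coreQuotientSize d l m - d).toNat := by
  have hd := abs_le.1 (abs_le_coreSize d)
  unfold coreQuotientSize
  constructor <;> exact support_subset_range_of_partitionSize_le (by omega)

lemma partitionSize_ofBetaSet_weave {n : ℕ} {d : ℤ} {l m : ℕ →₀ ℕ} (hd : |d| ≤ n)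
    (hl : l.support ⊆ Finset.range (n + d).toNat) (hm : m.support ⊆ Finset.range (n - d).toNat) :
    partitionSize (ofBetaSet (weave (betaSet (n + d).toNat l) (betaSet (n - d).toNat m))) =
      coreQuotientSize d l m := by
  rw [abs_le] at hd
  obtain ⟨A, hA⟩ := Int.eq_ofNat_of_zero_le (a := n + d) (by omega)
  obtain ⟨B, hB⟩ := Int.eq_ofNat_of_zero_le (a := n - d) (by omega)
  rw [hA, Int.toNat_natCast] at hl ⊢
  rw [hB, Int.toNat_natCast] at hm ⊢
  have hsum := sum_eq_partitionSize_ofBetaSet (weave (betaSet A l) (betaSet B m))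
  rw [sum_weave, sum_betaSet hl, sum_betaSet hm, card_weave, card_betaSet, card_betaSet] at hsum
  have gauss (N : ℕ) : 2 * ∑ i ∈ Finset.range N, (i : ℤ) = N * (N - 1) := by
    induction N with
    | zero => simp
    | succ N ih =>
      rw [Finset.sum_range_succ, mul_add, ih]
      push_cast
      ring
  have gaussA := gauss A
  have gaussB := gauss B
  have gaussAB := gauss (A + B)
  zify [coreQuotientSize, coe_coreSize] at hsum ⊢
  push_cast at gaussAB
  rw [← hA] at gaussA gaussAB
  rw [← hB] at gaussB gaussAB hsum
  linarith

lemma partitionSize_ofCoreQuotient (d : ℤ) (l m : ℕ →₀ ℕ) :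
    partitionSize (ofCoreQuotient d l m) = coreQuotientSize d l m :=
  partitionSize_ofBetaSet_weave (abs_le_coreQuotientSize d l m)
    (support_subset_range_runners d l m).1 (support_subset_range_runners d l m).2

lemma ofCoreQuotient_inj {d d' : ℤ} {l l' m m' : ℕ →₀ ℕ} :
    ofCoreQuotient d l m = ofCoreQuotient d' l' m' ↔ d = d' ∧ l = l' ∧ m = m' := by
  refine ⟨fun h => ?_, by rintro ⟨rfl, rfl, rfl⟩; rfl⟩
  have hsize : coreQuotientSize d' l' m' = coreQuotientSize d l m := by
    rw [← partitionSize_ofCoreQuotient, ← h, partitionSize_ofCoreQuotient]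
  have hd := abs_le.1 (abs_le_coreQuotientSize d l m)
  have hd' := abs_le.1 (abs_le_coreQuotientSize d' l' m')
  obtain ⟨hl, hm⟩ := support_subset_range_runners d l m
  obtain ⟨hl', hm'⟩ := support_subset_range_runners d' l' m'
  unfold ofCoreQuotient at h
  rw [hsize] at h hd' hl' hm'
  obtain ⟨hY, hZ⟩ := weave_inj.1 <| ofBetaSet_injOn (2 * coreQuotientSize d l m)
    (by simp only [Set.mem_ofPred_eq, card_weave, card_betaSet]; omega)
    (by simp only [Set.mem_ofPred_eq, card_weave, card_betaSet]; omega) h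
  have hdd' : d = d' := by
    have hcard := congrArg Finset.card hY
    rw [card_betaSet, card_betaSet] at hcard
    omega
  subst hdd'
  exact ⟨rfl, betaSet_injOn _ hl hl' hY, betaSet_injOn _ hm hm' hZ⟩

end CoreQuotient

section Tower

/-- The index set `ℕ × 𝒞`, viewed as the set of vertices of the infinite binary tree: `(a, 𝔠)` is
reached from the root `(0, [])` by one run of left steps and a right step for each entry of `𝔠`,
`c` steps in total for an entry `c` and starting from the end of the list, followed by `a` left
steps. -/
abbrev TreeNode : Type := ℕ × List ℕ+

/-- The depth of a node of the binary tree. -/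
def depth (i : TreeNode) : ℕ := i.1 + csum i.2

/-- The left child of a node of the binary tree. -/
def leftChild (i : TreeNode) : TreeNode := (i.1 + 1, i.2)

/-- The right child of a node of the binary tree. -/
def rightChild (i : TreeNode) : TreeNode := (0, i.1.succPNat :: i.2)

lemma depth_leftChild (i : TreeNode) : depth (leftChild i) = depth i + 1 := by
  simp only [depth, leftChild]; omega

lemma csum_cons (x : ℕ+) (c : List ℕ+) : csum (x :: c) = x + csum c := by
  simp [csum]

lemma depth_rightChild (i : TreeNode) : depth (rightChild i) = depth i + 1 := by
  simp only [depth, rightChild, csum_cons, Nat.succPNat_coe]; omega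

lemma leftChild_injective : Function.Injective leftChild := fun i j h => by
  simpa [leftChild, Prod.ext_iff] using h

lemma rightChild_injective : Function.Injective rightChild := fun i j h => by
  simpa [rightChild, Prod.ext_iff] using h

lemma leftChild_ne_root (i : TreeNode) : leftChild i ≠ (0, []) := by simp [leftChild]

lemma rightChild_ne_root (i : TreeNode) : rightChild i ≠ (0, []) := by simp [rightChild]

lemma leftChild_ne_rightChild (i j : TreeNode) : leftChild i ≠ rightChild j := by
  simp [leftChild, rightChild]

lemma eq_root_or_eq_child (i : TreeNode) :
    i = (0, []) ∨ (∃ j, i = leftChild j) ∨ ∃ j, i = rightChild j := by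
  rcases i with ⟨_ | a, _ | ⟨x, c⟩⟩
  · exact Or.inl rfl
  · exact Or.inr <| Or.inr ⟨(x.natPred, c), by simp [rightChild]⟩
  all_goals exact Or.inr <| Or.inl ⟨(a, _), rfl⟩

/-- The size of the partition whose 2-core tower has a core of size `g i` at each node `i`. -/
noncomputable def towerSize (g : TreeNode →₀ ℕ) : ℕ :=
  Finsupp.weight (fun i => 2 ^ depth i) g

lemma towerSize_single (i : TreeNode) (c : ℕ) :
    towerSize (Finsupp.single i c) = c * 2 ^ depth i :=
  Finsupp.weight_single _ i c

/-- The part of a 2-core tower above the left child of the root. -/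
noncomputable def leftTower (g : TreeNode →₀ ℕ) : TreeNode →₀ ℕ :=
  Finsupp.comapDomain.addMonoidHom leftChild_injective g

/-- The part of a 2-core tower above the right child of the root. -/
noncomputable def rightTower (g : TreeNode →₀ ℕ) : TreeNode →₀ ℕ :=
  Finsupp.comapDomain.addMonoidHom rightChild_injective g

lemma leftTower_single_leftChild (i : TreeNode) (c : ℕ) :
    leftTower (Finsupp.single (leftChild i) c) = Finsupp.single i c :=
  Finsupp.comapDomain_single _ _ _ leftChild_injective.injOn

lemma rightTower_single_rightChild (i : TreeNode) (c : ℕ) :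
    rightTower (Finsupp.single (rightChild i) c) = Finsupp.single i c :=
  Finsupp.comapDomain_single _ _ _ rightChild_injective.injOn

lemma leftTower_single_of_ne {i : TreeNode} (hi : ∀ j, leftChild j ≠ i) (c : ℕ) :
    leftTower (Finsupp.single i c) = 0 :=
  Finsupp.ext fun j => Finsupp.single_eq_of_ne (hi j)

lemma rightTower_single_of_ne {i : TreeNode} (hi : ∀ j, rightChild j ≠ i) (c : ℕ) :
    rightTower (Finsupp.single i c) = 0 :=
  Finsupp.ext fun j => Finsupp.single_eq_of_ne (hi j)

lemma tower_ext {g g' : TreeNode →₀ ℕ} (hroot : g (0, []) = g' (0, []))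
    (hleft : leftTower g = leftTower g') (hright : rightTower g = rightTower g') : g = g' := by
  ext i
  obtain rfl | ⟨j, rfl⟩ | ⟨j, rfl⟩ := eq_root_or_eq_child i
  · exact hroot
  · exact DFunLike.congr_fun hleft j
  · exact DFunLike.congr_fun hright j

lemma towerSize_eq (g : TreeNode →₀ ℕ) :
    towerSize g = g (0, []) + 2 * towerSize (leftTower g) + 2 * towerSize (rightTower g) := by
  induction g using Finsupp.induction_linear with
  | zero => simp [towerSize, leftTower, rightTower]
  | add g h hg hh =>
    simp only [towerSize, leftTower, rightTower, map_add, Finsupp.add_apply] at hg hh ⊢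
    omega
  | single i c =>
    have hzero : towerSize 0 = 0 := map_zero _
    obtain rfl | ⟨j, rfl⟩ | ⟨j, rfl⟩ := eq_root_or_eq_child i
    · rw [leftTower_single_of_ne leftChild_ne_root, rightTower_single_of_ne rightChild_ne_root,
        hzero, towerSize_single, Finsupp.single_eq_same]
      simp [depth, csum]
    · rw [leftTower_single_leftChild,
        rightTower_single_of_ne fun k => (leftChild_ne_rightChild j k).symm, hzero,
        Finsupp.single_eq_of_ne (leftChild_ne_root j).symm, towerSize_single, towerSize_single,
        depth_leftChild]
      ring
    · rw [leftTower_single_of_ne fun k => leftChild_ne_rightChild k j,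
        rightTower_single_rightChild, hzero,
        Finsupp.single_eq_of_ne (rightChild_ne_root j).symm, towerSize_single, towerSize_single,
        depth_rightChild]
      ring

lemma towerSize_eq_zero {g : TreeNode →₀ ℕ} : towerSize g = 0 ↔ g = 0 := by
  have : Finsupp.NonTorsionWeight ℕ fun i : TreeNode => 2 ^ depth i :=
    Finsupp.nonTorsionWeight_of ℕ _ fun _ => pow_ne_zero _ two_ne_zero
  exact Finsupp.weight_eq_zero_iff_eq_zero _

lemma towerSize_leftTower_lt {g : TreeNode →₀ ℕ} (hg : g ≠ 0) :
    towerSize (leftTower g) < towerSize g := by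
  have := towerSize_eq g
  have := towerSize_eq_zero.not.2 hg
  omega

lemma towerSize_rightTower_lt {g : TreeNode →₀ ℕ} (hg : g ≠ 0) :
    towerSize (rightTower g) < towerSize g := by
  have := towerSize_eq g
  have := towerSize_eq_zero.not.2 hg
  omega

/-- The 2-core towers: a 2-core is determined by its size, which is a triangular number, so a tower
is encoded by the sizes of its cores. -/
def coreTowers : Set (TreeNode →₀ ℕ) := {g | ∀ i, IsTriangular (g i)}

lemma leftTower_mem_coreTowers {g : TreeNode →₀ ℕ} (hg : g ∈ coreTowers) :
    leftTower g ∈ coreTowers := fun i => hg (leftChild i)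

lemma rightTower_mem_coreTowers {g : TreeNode →₀ ℕ} (hg : g ∈ coreTowers) :
    rightTower g ∈ coreTowers := fun i => hg (rightChild i)

/-- The charge of the 2-core of size `t`; a junk value if `t` is not triangular. -/
noncomputable def coreCharge (t : ℕ) : ℤ := Function.invFun coreSize t

lemma coreSize_coreCharge {t : ℕ} (ht : IsTriangular t) : coreSize (coreCharge t) = t :=
  Function.invFun_eq ht.exists_coreSize_eq

open Classical in
/-- The partition with 2-core tower `g`. -/
noncomputable def ofCoreTower (g : TreeNode →₀ ℕ) : ℕ →₀ ℕ :=
  if hg : g = 0 then 0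
  else
    have := towerSize_leftTower_lt hg
    have := towerSize_rightTower_lt hg
    ofCoreQuotient (coreCharge (g (0, []))) (ofCoreTower (leftTower g))
      (ofCoreTower (rightTower g))
termination_by towerSize g

lemma ofCoreTower_of_ne_zero {g : TreeNode →₀ ℕ} (hg : g ≠ 0) :
    ofCoreTower g = ofCoreQuotient (coreCharge (g (0, []))) (ofCoreTower (leftTower g))
      (ofCoreTower (rightTower g)) := by
  rw [ofCoreTower, dif_neg hg]

lemma partitionSize_ofCoreTower {g : TreeNode →₀ ℕ} (hg : g ∈ coreTowers) :
    partitionSize (ofCoreTower g) = towerSize g := by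
  induction g using ofCoreTower.induct with
  | case1 => simp [ofCoreTower, partitionSize, towerSize]
  | case2 g hg0 _ _ ihl ihr =>
    rw [ofCoreTower_of_ne_zero hg0, partitionSize_ofCoreQuotient, coreQuotientSize,
      coreSize_coreCharge (hg _), ihl (leftTower_mem_coreTowers hg),
      ihr (rightTower_mem_coreTowers hg), towerSize_eq g]

lemma ofCoreTower_eq_zero {g : TreeNode →₀ ℕ} (hg : g ∈ coreTowers) :
    ofCoreTower g = 0 ↔ g = 0 := by
  refine ⟨fun h => ?_, fun h => by rw [h, ofCoreTower, dif_pos rfl]⟩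
  rw [← towerSize_eq_zero, ← partitionSize_ofCoreTower hg, h]
  simp [partitionSize]

lemma ofCoreTower_injOn : Set.InjOn ofCoreTower coreTowers := by
  intro g hg g' hg' h
  induction g using ofCoreTower.induct generalizing g' with
  | case1 =>
    rw [eq_comm, ← ofCoreTower_eq_zero hg', ← h, ofCoreTower_eq_zero hg]
  | case2 g hg0 _ _ ihl ihr =>
    have hg0' : g' ≠ 0 := by
      rwa [Ne, ← ofCoreTower_eq_zero hg', ← h, ofCoreTower_eq_zero hg]
    rw [ofCoreTower_of_ne_zero hg0, ofCoreTower_of_ne_zero hg0', ofCoreQuotient_inj] at h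
    obtain ⟨hcharge, hleft, hright⟩ := h
    refine tower_ext ?_
      (ihl (leftTower_mem_coreTowers hg) (leftTower_mem_coreTowers hg') hleft)
      (ihr (rightTower_mem_coreTowers hg) (rightTower_mem_coreTowers hg') hright)
    rw [← coreSize_coreCharge (hg _), hcharge, coreSize_coreCharge (hg' _)]

end Tower

section Weights

/-- The finitely supported pairs `(f, f′)` with triangular values and total weight `n`. -/
def weights (n : ℕ) : Set ((List ℕ+ →₀ ℕ) × (TreeNode →₀ ℕ)) :=
  {p | (∀ c, IsTriangular (p.1 c)) ∧ p.2 ∈ coreTowers ∧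
    Finsupp.weight (fun c => 2 ^ csum c) p.1 + towerSize p.2 = n}

lemma finsum_mul_eq_weight {σ : Type*} (w : σ → ℕ) (f : σ →₀ ℕ) :
    ∑ᶠ i, w i * f i = Finsupp.weight w f := by
  rw [Finsupp.weight_apply, Finsupp.sum,
    finsum_eq_sum_of_support_subset _ (s := f.support) fun i hi => by
      simpa using right_ne_zero_of_mul hi]
  exact Finset.sum_congr rfl fun i _ => mul_comm _ _

lemma image_weights (n : ℕ) :
    Prod.map (fun f : List ℕ+ →₀ ℕ => ⇑f) (fun g : TreeNode →₀ ℕ => ⇑g) '' weights n =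
      { ff | (∀ c, IsTriangular (ff.1 c)) ∧ (∀ i, IsTriangular (ff.2 i)) ∧
        (Function.support ff.1).Finite ∧ (Function.support ff.2).Finite ∧
        (∑ᶠ c : List ℕ+, 2 ^ csum c * ff.1 c) +
          (∑ᶠ i : ℕ × List ℕ+, 2 ^ (i.1 + csum i.2) * ff.2 i) = n } := by
  have hsum (f : List ℕ+ →₀ ℕ) (g : TreeNode →₀ ℕ) :
      (∑ᶠ c : List ℕ+, 2 ^ csum c * f c) + (∑ᶠ i : ℕ × List ℕ+, 2 ^ (i.1 + csum i.2) * g i) =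
        Finsupp.weight (fun c => 2 ^ csum c) f + towerSize g :=
    congrArg₂ (· + ·) (finsum_mul_eq_weight _ f) (finsum_mul_eq_weight _ g)
  ext ⟨f, g⟩
  constructor
  · rintro ⟨⟨f, g⟩, ⟨hf, hg, hn⟩, h⟩
    obtain ⟨rfl, rfl⟩ := Prod.mk.inj h
    exact ⟨hf, hg, f.hasFiniteSupport, g.hasFiniteSupport, (hsum f g).trans hn⟩
  · rintro ⟨hf, hg, hf', hg', hn⟩
    lift f to List ℕ+ →₀ ℕ using hf'
    lift g to TreeNode →₀ ℕ using hg'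
    exact ⟨(f, g), ⟨hf, hg, (hsum f g).symm.trans hn⟩, rfl⟩

/-- The tower with value `f 𝔠` at each node `(0, 𝔠)` and `0` elsewhere. -/
noncomputable def seqTower (f : List ℕ+ →₀ ℕ) : TreeNode →₀ ℕ :=
  Finsupp.mapDomain (Prod.mk 0) f

lemma seqTower_injective : Function.Injective seqTower :=
  Finsupp.mapDomain_injective (Prod.mk_right_injective 0)

lemma seqTower_zero_apply (f : List ℕ+ →₀ ℕ) (c : List ℕ+) : seqTower f (0, c) = f c :=
  Finsupp.mapDomain_apply (Prod.mk_right_injective 0) f c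

lemma seqTower_succ_apply (f : List ℕ+ →₀ ℕ) (a : ℕ) (c : List ℕ+) :
    seqTower f (a + 1, c) = 0 :=
  Finsupp.mapDomain_of_notMem_range _ _ <| by simp

lemma seqTower_mem_coreTowers {f : List ℕ+ →₀ ℕ} (hf : ∀ c, IsTriangular (f c)) :
    seqTower f ∈ coreTowers := by
  rintro ⟨_ | a, c⟩
  · rw [seqTower_zero_apply]
    exact hf c
  · rw [seqTower_succ_apply]
    exact ⟨0, rfl⟩

lemma towerSize_seqTower (f : List ℕ+ →₀ ℕ) :
    towerSize (seqTower f) = Finsupp.weight (fun c => 2 ^ csum c) f := by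
  rw [towerSize, seqTower, Finsupp.weight, Finsupp.weight]
  simp [Finsupp.linearCombination_mapDomain, Function.comp_def, depth]

end Weights

section Bipartitions

/-- The bipartitions of `n`. -/
def bipartitions (n : ℕ) : Set ((Σ m : ℕ, Nat.Partition m) × (Σ m : ℕ, Nat.Partition m)) :=
  {pq | pq.1.1 + pq.2.1 = n}

lemma bipartitions_finite (n : ℕ) : (bipartitions n).Finite := by
  have hfin : {p : Σ m : ℕ, Nat.Partition m | p.1 ≤ n}.Finite :=
    ((Finset.Iic n).sigma fun _ => Finset.univ).finite_toSet.subset fun p hp =>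
      Finset.mem_sigma.2 ⟨Finset.mem_Iic.2 hp, Finset.mem_univ _⟩
  exact (hfin.prod hfin).subset fun pq (h : pq.1.1 + pq.2.1 = n) =>
    ⟨Nat.le.intro h, Nat.le.intro ((add_comm _ _).trans h)⟩

/-- The bipartition with 2-core towers `seqTower f` and `g`. -/
noncomputable def toBipartition (p : (List ℕ+ →₀ ℕ) × (TreeNode →₀ ℕ)) :
    (Σ m : ℕ, Nat.Partition m) × (Σ m : ℕ, Nat.Partition m) :=
  (toPartition (ofCoreTower (seqTower p.1)), toPartition (ofCoreTower p.2))

lemma toBipartition_mapsTo (n : ℕ) : Set.MapsTo toBipartition (weights n) (bipartitions n) := by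
  rintro ⟨f, g⟩ ⟨hf, hg, hn⟩
  change (toPartition _).1 + (toPartition _).1 = n
  rw [toPartition_fst, toPartition_fst, partitionSize_ofCoreTower (seqTower_mem_coreTowers hf),
    partitionSize_ofCoreTower hg, towerSize_seqTower, hn]

lemma toBipartition_injOn (n : ℕ) : Set.InjOn toBipartition (weights n) := by
  rintro ⟨f, g⟩ ⟨hf, hg, -⟩ ⟨f', g'⟩ ⟨hf', hg', -⟩ h
  obtain ⟨h₁, h₂⟩ := Prod.mk.inj h
  have hfirst := ofCoreTower_injOn (seqTower_mem_coreTowers hf) (seqTower_mem_coreTowers hf')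
    (toPartition_injective h₁)
  have hsecond := ofCoreTower_injOn hg hg' (toPartition_injective h₂)
  exact Prod.ext (seqTower_injective hfirst) hsecond

lemma exists_mem_bipartitions_notMem_image {n : ℕ} (hn : 2 ≤ n) :
    ∃ pq ∈ bipartitions n, pq ∉ toBipartition '' weights n := by
  let g : TreeNode →₀ ℕ := Finsupp.single (1, []) 1
  have hg : g ∈ coreTowers := fun i => by
    rcases eq_or_ne i (1, []) with rfl | hi
    · exact ⟨1, Finsupp.single_eq_same⟩
    · exact ⟨0, Finsupp.single_eq_of_ne hi⟩
  refine ⟨(toPartition (ofCoreTower g), toPartition (Finsupp.single 0 (n - 2))), ?_, ?_⟩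
  · have hsize : towerSize g = 2 := towerSize_single (1, []) 1
    change (toPartition _).1 + (toPartition _).1 = n
    rw [toPartition_fst, toPartition_fst, partitionSize_ofCoreTower hg, hsize, partitionSize,
      Finsupp.weight_single, smul_eq_mul]
    omega
  · rintro ⟨⟨f, g'⟩, ⟨hf, -, -⟩, h⟩
    have hfg : seqTower f = g := ofCoreTower_injOn (seqTower_mem_coreTowers hf) hg
      (toPartition_injective (Prod.mk.inj h).1)
    have hone : (0 : ℕ) = 1 := calc
      0 = seqTower f (1, []) := (seqTower_succ_apply f 0 []).symm
      _ = g (1, []) := by rw [hfg]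
      _ = 1 := Finsupp.single_eq_same
    exact zero_ne_one hone

end Bipartitions

/-- For every integer `n ≥ 2`, the number of ordered pairs `(f, f′)`, where `f : 𝒞 → ℕ` and
`f′ : ℕ × 𝒞 → ℕ` are finitely supported functions all of whose values are triangular numbers
and which satisfy `∑ 2^{|𝔠|} * f 𝔠 + ∑ 2^{a + |𝔠|} * f′ (a, 𝔠) = n`, is strictly smaller
than the number of bipartitions of `n`. -/
theorem weight_count_Sp_bad_prime_lt (n : ℕ) (hn : 2 ≤ n) :
    Set.ncard { ff : (List ℕ+ → ℕ) × (ℕ × List ℕ+ → ℕ) |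
      (∀ c, IsTriangular (ff.1 c)) ∧ (∀ i, IsTriangular (ff.2 i)) ∧
      (Function.support ff.1).Finite ∧ (Function.support ff.2).Finite ∧
      (∑ᶠ c : List ℕ+, 2 ^ csum c * ff.1 c) +
        (∑ᶠ i : ℕ × List ℕ+, 2 ^ (i.1 + csum i.2) * ff.2 i) = n } <
    Set.ncard { pq : (Σ m : ℕ, Nat.Partition m) × (Σ m : ℕ, Nat.Partition m) |
      pq.1.1 + pq.2.1 = n } := by
  rw [← image_weights, Set.ncard_image_of_injective _
    (DFunLike.coe_injective.prodMap DFunLike.coe_injective),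
    ← (toBipartition_injOn n).ncard_image]
  obtain ⟨pq, hpq, hpq'⟩ := exists_mem_bipartitions_notMem_image hn
  exact Set.ncard_lt_ncard
    (Set.ssubset_iff_of_subset (toBipartition_mapsTo n).image_subset |>.2 ⟨pq, hpq, hpq'⟩)
    (bipartitions_finite n)
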